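/- arXiv:2412.13319 — 10 statements merged into one kernel-verified Lean document; each statement's English description precedes it below -/
import Mathlib

section
/- Let M be a metric space such that every dense subset D of M carries a nontrivial probability measure. Then there exist a real number r > 0 and a subset M' of M such that M' is r-separated and M' carries a nontrivial probability measure. -/
open MeasureTheory

/-- A subset `A` of a space carries a *nontrivial probability measure* if there is a
probability measure on `A` (with the powerset σ-algebra `⊤`) giving every singleton
measure zero. -/
def HasNontrivialProbMeasure {M : Type*} (A : Set M) : Prop :=
  ∃ μ : @Measure ↥A ⊤, @IsProbabilityMeasure ↥A ⊤ μ ∧ ∀ x : ↥A, μ {x} = 0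

theorem exists_maxsep {M : Type*} [MetricSpace M] (r : ℝ) :
    ∃ S : Set M, (∀ x ∈ S, ∀ y ∈ S, x ≠ y → r ≤ dist x y) ∧
      ∀ x, x ∉ S → ∃ y ∈ S, dist x y < r := by
  obtain ⟨S, hS⟩ := zorn_subset {S : Set M | ∀ x ∈ S, ∀ y ∈ S, x ≠ y → r ≤ dist x y} (by
    intro c hc hch
    refine ⟨⋃₀ c, ?_, fun s hs => Set.subset_sUnion_of_mem hs⟩
    rintro x ⟨s, hs, hxs⟩ y ⟨t, ht, hyt⟩ hxy
    rcases hch.total hs ht with hst | hst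
    · exact hc ht x (hst hxs) y hyt hxy
    · exact hc hs x hxs y (hst hyt) hxy)
  refine ⟨S, hS.prop, fun x hx => ?_⟩
  by_contra! hcon
  apply hx
  refine hS.le_of_ge (y := insert x S) ?_ (Set.subset_insert x S) (Set.mem_insert x S)
  rintro a (rfl | ha) b (rfl | hb) hab
  · exact absurd rfl hab
  · exact hcon b hb
  · rw [dist_comm]; exact hcon a ha
  · exact hS.prop a ha b hb hab

theorem transfer {A B : Type*} (f : B → A) (hf : Function.Injective f)
    (μ : @Measure A ⊤) (hμ : @IsProbabilityMeasure A ⊤ μ) (h0 : ∀ x : A, μ {x} = 0)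
    (hpos : μ (Set.range f) ≠ 0) :
    ∃ ν : @Measure B ⊤, @IsProbabilityMeasure B ⊤ ν ∧ ∀ x : B, ν {x} = 0 := by
  letI : MeasurableSpace A := ⊤
  letI : MeasurableSpace B := ⊤
  have hc : ∀ s : Set B, μ.comap f s = μ (f '' s) := fun s =>
    Measure.comap_apply f hf (fun _ _ => trivial) μ trivial
  refine ⟨(μ (Set.range f))⁻¹ • μ.comap f, ⟨?_⟩, fun x => ?_⟩
  · rw [Measure.smul_apply, hc, Set.image_univ, smul_eq_mul]
    exact ENNReal.inv_mul_cancel hpos (measure_ne_top μ _)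
  · rw [Measure.smul_apply, hc, Set.image_singleton, h0, smul_zero]

theorem stmt0 {M : Type*} [MetricSpace M]
    (h : ∀ D : Set M, Dense D → HasNontrivialProbMeasure D) :
    ∃ (r : ℝ) (M' : Set M), 0 < r ∧
      (∀ x ∈ M', ∀ y ∈ M', x ≠ y → r ≤ dist x y) ∧
      HasNontrivialProbMeasure M' := by
  choose S hS hmax using fun n : ℕ => exists_maxsep (M := M) (1 / ((n : ℝ) + 1))
  have hD : Dense (⋃ n, S n) := by
    rw [Metric.dense_iff]
    intro x r hr
    obtain ⟨n, hn⟩ := exists_nat_one_div_lt hr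
    by_cases hx : x ∈ S n
    · exact ⟨x, Metric.mem_ball_self hr, Set.mem_iUnion.2 ⟨n, hx⟩⟩
    · obtain ⟨y, hy, hxy⟩ := hmax n x hx
      refine ⟨y, ?_, Set.mem_iUnion.2 ⟨n, hy⟩⟩
      rw [Metric.mem_ball, dist_comm]
      exact hxy.trans hn
  obtain ⟨μ, hμ, h0⟩ := h _ hD
  have hsub : ∀ n, S n ⊆ ⋃ n, S n := fun n => Set.subset_iUnion S n
  have : ∃ n, μ (Set.range (Set.inclusion (hsub n))) ≠ 0 := by
    by_contra! hcon
    have h1 := measure_iUnion_null hcon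
    have h2 : (⋃ n, Set.range (Set.inclusion (hsub n))) = Set.univ := by
      ext ⟨x, hx⟩
      obtain ⟨n, hn⟩ := Set.mem_iUnion.1 hx
      simp only [Set.mem_iUnion, Set.mem_univ, iff_true]
      exact ⟨n, ⟨x, hn⟩, rfl⟩
    rw [h2, hμ.measure_univ] at h1
    exact one_ne_zero h1
  obtain ⟨n, hn⟩ := this
  exact ⟨1 / ((n : ℝ) + 1), S n, by positivity, hS n,
    transfer _ (Set.inclusion_injective (hsub n)) μ hμ h0 hn⟩
end

section
/- Let M be a metric space, r > 0, and let M' be an r-separated subset of M carrying a nontrivial probability measure μ'. Define the Borel measure μ on M by μ(E) = μ'({x ∈ M' : x ∈ E}) for Borel E ⊆ M (the pushforward of μ' along the inclusion of M' into M). Then μ is a Borel probability measure on M that is not concentrated on any separable subset: for every closed separable set S ⊆ M one has μ(M \ S) = 1. -/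
open MeasureTheory

theorem stmt3 {M : Type*} [MetricSpace M] [MeasurableSpace M] [BorelSpace M]
    {r : ℝ} (hr : 0 < r) {M' : Set M}
    (hsep : ∀ x ∈ M', ∀ y ∈ M', x ≠ y → r ≤ dist x y)
    (μ' : @Measure ↥M' ⊤)
    (hprob : @IsProbabilityMeasure ↥M' ⊤ μ')
    (hnontriv : ∀ x : ↥M', μ' {x} = 0)
    (μ : Measure M)
    (hμ : ∀ E : Set M, MeasurableSet E → μ E = μ' ((↑) ⁻¹' E : Set ↥M')) :
    IsProbabilityMeasure μ ∧
      ∀ S : Set M, IsClosed S → TopologicalSpace.IsSeparable S → μ Sᶜ = 1 := by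
  have h1 : IsProbabilityMeasure μ := by
    constructor
    rw [hμ _ MeasurableSet.univ, Set.preimage_univ]
    exact hprob.measure_univ
  refine ⟨h1, ?_⟩
  intro S hS hsepS
  rw [prob_compl_eq_one_iff hS.measurableSet, hμ _ hS.measurableSet]
  obtain ⟨c, hc, hSc⟩ := hsepS
  have hex : ∀ x : ↥M', (x : M) ∈ S → ∃ y ∈ c, dist (x : M) y < r / 2 := fun x hx =>
    Metric.mem_closure_iff.1 (hSc hx) (r / 2) (half_pos hr)
  have hcount : ((↑) ⁻¹' S : Set ↥M').Countable := by
    have hex' : ∀ x : ↥M', ∃ y : M, (x : M) ∈ S → y ∈ c ∧ dist (x : M) y < r / 2 := by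
      intro x
      by_cases hx : (x : M) ∈ S
      · obtain ⟨y, hy⟩ := hex x hx
        exact ⟨y, fun _ => hy⟩
      · exact ⟨x, fun h => absurd h hx⟩
    choose f hf using hex'
    refine Set.MapsTo.countable_of_injOn (f := f) (t := c) (fun x hx => (hf x hx).1) ?_ hc
    intro x hx y hy hxy
    by_contra hne
    have h2 := hsep x x.2 y y.2 (fun h => hne (Subtype.ext h))
    have h3 := (hf x hx).2
    have h4 := (hf y hy).2
    rw [← hxy] at h4
    have h5 := dist_triangle_right (x : M) (y : M) (f x)
    linarith
  rw [← Set.biUnion_of_singleton ((↑) ⁻¹' S : Set ↥M')]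
  exact (measure_biUnion_null_iff hcount).2 (fun x _ => hnontriv x)
end

section
/- Let M be a metric space having a dense subset D that carries no nontrivial probability measure. Then every σ-finite Borel measure μ on M is concentrated on a separable subset: there exists a closed separable set S ⊆ M with μ(M \ S) = 0. -/
open MeasureTheory

theorem aux_meas {M ι : Type*} [MetricSpace M] [MeasurableSpace M] [BorelSpace M]
    [LinearOrder ι] (f : ι → M) (e : ℝ) (g : M → ι)
    (hg : ∀ x, dist x (f (g x)) < e) (hmin : ∀ x i, dist x (f i) < e → g x ≤ i) (T : Set ι) :
    MeasurableSet (g ⁻¹' T) := by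
  have key : g ⁻¹' T = ⋃ n : ℕ,
      closure {x | g x ∈ T ∧ dist x (f (g x)) ≤ e - 1 / ((n : ℝ) + 1)} := by
    apply Set.Subset.antisymm
    · intro x hx
      obtain ⟨n, hn⟩ := exists_nat_one_div_lt (sub_pos.2 (hg x))
      refine Set.mem_iUnion.2 ⟨n, subset_closure ⟨hx, ?_⟩⟩
      linarith
    · refine Set.iUnion_subset fun n => ?_
      have hδ : (0 : ℝ) < 1 / ((n : ℝ) + 1) := by positivity
      generalize 1 / ((n : ℝ) + 1) = δ at hδ
      intro x hx
      have hx' := Metric.mem_closure_iff.1 hx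
      have sep : ∀ y z, dist y (f (g y)) ≤ e - δ → dist y z < δ → g z ≤ g y := by
        intro y z hy hyz
        apply hmin
        have := dist_triangle z y (f (g y))
        rw [dist_comm z y] at this
        linarith
      obtain ⟨y, ⟨hyT, hy⟩, hxy⟩ := hx' (δ / 2) (by linarith)
      have h1 : g x ≤ g y := sep y x hy (by rw [dist_comm]; linarith)
      obtain ⟨z, ⟨hzT, hz⟩, hxz⟩ := hx' (min (δ / 2) (e - dist x (f (g x))))
        (lt_min (by linarith) (sub_pos.2 (hg x)))
      have hz1 := lt_of_lt_of_le hxz (min_le_left _ _)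
      have hz2 := lt_of_lt_of_le hxz (min_le_right _ _)
      have h2 : g z ≤ g x := by
        apply hmin
        have := dist_triangle z x (f (g x))
        rw [dist_comm z x] at this
        linarith
      have h3 : g y ≤ g z := sep z y hz (by
        have := dist_triangle z x y
        rw [dist_comm z x] at this
        linarith)
      have : g x = g y := le_antisymm h1 (h3.trans h2)
      show g x ∈ T
      rw [this]; exact hyT
  rw [key]
  exact MeasurableSet.iUnion fun n => isClosed_closure.measurableSet

theorem aux_null {ι : Type*} [MeasurableSpace ι] (htop : ∀ s : Set ι, MeasurableSet s)
    (hno : ¬ ∃ μ : Measure ι, IsProbabilityMeasure μ ∧ ∀ x, μ {x} = 0)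
    (ν : Measure ι) [IsFiniteMeasure ν] : ∃ C : Set ι, C.Countable ∧ ν Cᶜ = 0 := by
  refine ⟨{i | 0 < ν {i}}, ?_, ?_⟩
  · exact Measure.countable_meas_pos_of_disjoint_iUnion (μ := ν) (As := fun i : ι => {i})
      (fun i => htop _) (fun i j hij => by simpa using hij)
  · by_contra h
    set C := {i | 0 < ν {i}} with hC
    apply hno
    refine ⟨(ν Cᶜ)⁻¹ • ν.restrict Cᶜ, ⟨?_⟩, ?_⟩
    · simp only [Measure.smul_apply, Measure.restrict_apply_univ, smul_eq_mul]
      exact ENNReal.inv_mul_cancel h (measure_ne_top _ _)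
    · intro x
      rw [Measure.smul_apply, Measure.restrict_apply (htop _)]
      have : ν ({x} ∩ Cᶜ) = 0 := by
        by_cases hx : 0 < ν {x}
        · have : ({x} ∩ Cᶜ : Set ι) = ∅ := by
            ext y
            simp only [Set.mem_inter_iff, Set.mem_singleton_iff, Set.mem_compl_iff,
              Set.mem_empty_iff_false, iff_false, not_and, not_not]
            rintro rfl
            exact hx
          rw [this]; simp
        · exact measure_mono_null Set.inter_subset_left (by simpa using hx)
      simp [this]

theorem aux_main {M ι : Type*} [MetricSpace M] [MeasurableSpace M] [BorelSpace M]
    [MeasurableSpace ι] (htop : ∀ s : Set ι, MeasurableSet s)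
    (hno : ¬ ∃ μ : Measure ι, IsProbabilityMeasure μ ∧ ∀ x, μ {x} = 0)
    (f : ι → M) (hf : DenseRange f) (μ : Measure M) [IsFiniteMeasure μ] :
    ∃ S : Set M, IsClosed S ∧ TopologicalSpace.IsSeparable S ∧ μ Sᶜ = 0 := by
  obtain ⟨_, wf⟩ := exists_wellFoundedLT ι
  have step : ∀ n : ℕ, ∃ C : Set ι, C.Countable ∧
      ∀ᵐ x ∂μ, ∃ i ∈ C, dist x (f i) < 1 / ((n : ℝ) + 1) := by
    intro n
    have hδ : (0 : ℝ) < 1 / ((n : ℝ) + 1) := by positivity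
    generalize 1 / ((n : ℝ) + 1) = e at hδ
    have hne : ∀ x, {i | dist x (f i) < e}.Nonempty := fun x => hf.exists_dist_lt x hδ
    let g : M → ι := fun x => wellFounded_lt.min {i | dist x (f i) < e} (hne x)
    have hg : ∀ x, dist x (f (g x)) < e := fun x => wellFounded_lt.min_mem _ (hne x)
    have hmin : ∀ x i, dist x (f i) < e → g x ≤ i := fun x i hi =>
      not_lt.1 (wellFounded_lt.not_lt_min {i | dist x (f i) < e} hi)
    have hm : Measurable g := fun T _ => aux_meas f e g hg hmin T
    obtain ⟨C, hC, hC0⟩ := aux_null htop hno (μ.map g)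
    rw [Measure.map_apply hm (htop _)] at hC0
    refine ⟨C, hC, ?_⟩
    have : ∀ᵐ x ∂μ, g x ∈ C := hC0
    filter_upwards [this] with x hx
    exact ⟨g x, hx, hg x⟩
  choose C hC hae using step
  refine ⟨closure (⋃ n, f '' C n), isClosed_closure,
    (Set.countable_iUnion fun n => (hC n).image f).isSeparable.closure, ?_⟩
  have : ∀ᵐ x ∂μ, x ∈ closure (⋃ n, f '' C n) := by
    filter_upwards [ae_all_iff.2 hae] with x hx
    rw [Metric.mem_closure_iff]
    intro e he
    obtain ⟨n, hn⟩ := exists_nat_one_div_lt he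
    obtain ⟨i, hi, hd⟩ := hx n
    exact ⟨f i, Set.mem_iUnion.2 ⟨n, i, hi, rfl⟩, hd.trans hn⟩
  exact this

theorem stmt4 {M : Type*} [MetricSpace M] [MeasurableSpace M] [BorelSpace M]
    (D : Set M) (hD : Dense D) (hno : ¬ HasNontrivialProbMeasure D)
    (μ : Measure M) (hσ : SigmaFinite μ) :
    ∃ S : Set M, IsClosed S ∧ TopologicalSpace.IsSeparable S ∧ μ Sᶜ = 0 := by
  obtain ⟨ν, hν, hμν, _⟩ := exists_isFiniteMeasure_absolutelyContinuous μ
  obtain ⟨S, h1, h2, h3⟩ := @aux_main M ↥D _ _ _ ⊤ (fun _ => trivial) hno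
    (Subtype.val) hD.denseRange_val ν hν
  exact ⟨S, h1, h2, hμν h3⟩
end

section
/- Let M be a metric space such that every dense subset of M carries a nontrivial probability measure. Then there exists a Borel probability measure μ on M that is not concentrated on any separable subset, i.e. μ(M \ S) > 0 for every closed separable set S ⊆ M. -/
open MeasureTheory

lemma aux_max {M : Type*} [MetricSpace M] (ε : ℝ) (hε : 0 < ε) :
    ∃ A : Set M, A.Pairwise (fun x y => ε ≤ dist x y) ∧ ∀ x, ∃ y ∈ A, dist x y < ε := by
  obtain ⟨A, hA⟩ := zorn_subset {A : Set M | A.Pairwise (fun x y => ε ≤ dist x y)} (by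
    intro c hc hch
    refine ⟨⋃₀ c, ?_, fun s hs => Set.subset_sUnion_of_mem hs⟩
    exact (Set.pairwise_sUnion hch.directedOn).2 hc)
  refine ⟨A, hA.prop, fun x => ?_⟩
  by_contra! hx
  have h1 : insert x A ∈ {A : Set M | A.Pairwise (fun x y => ε ≤ dist x y)} := by
    refine Set.Pairwise.insert hA.prop ?_
    intro b hb _
    exact ⟨hx b hb, by rw [dist_comm]; exact hx b hb⟩
  have h2 : x ∈ A := hA.le_of_ge h1 (Set.subset_insert x A) (Set.mem_insert x A)
  have := hx x h2
  simp at this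
  linarith

lemma aux_countable {M : Type*} [MetricSpace M] (ε : ℝ) (hε : 0 < ε) (A S : Set M)
    (hA : A.Pairwise (fun x y => ε ≤ dist x y)) (hS : TopologicalSpace.IsSeparable S) :
    (A ∩ S).Countable := by
  have h1 : TopologicalSpace.IsSeparable (A ∩ S) := hS.mono Set.inter_subset_right
  have := h1.separableSpace
  have : DiscreteTopology ↥(A ∩ S) := DiscreteTopology.of_forall_le_dist hε (by
    intro x y hxy
    exact hA x.2.1 y.2.1 (fun h => hxy (Subtype.ext h)))
  exact Set.countable_coe_iff.mp (TopologicalSpace.separableSpace_iff_countable.mp ‹_›)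

lemma aux_push {M X : Type*} [MeasurableSpace M] [MeasurableSpace X]
    (hX : ∀ s : Set X, MeasurableSet s) (ν : Measure X) [IsProbabilityMeasure ν]
    (h0 : ∀ x, ν {x} = 0) (f : X → M) (hf : Function.Injective f) (A : ℕ → Set M)
    (hA : ∀ x, ∃ n, f x ∈ A n) :
    ∃ μ : Measure M, IsProbabilityMeasure μ ∧
      ∃ n, ∀ S : Set M, MeasurableSet S → (A n ∩ S).Countable → 0 < μ Sᶜ := by
  have hfm : Measurable f := fun s _ => hX _
  obtain ⟨n, hn⟩ : ∃ n, ν (f ⁻¹' A n) ≠ 0 := by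
    by_contra! hc
    have h1 : ν (⋃ n, f ⁻¹' A n) = 0 := measure_iUnion_null hc
    have h2 : (⋃ n, f ⁻¹' A n) = Set.univ := by
      ext x; simpa using hA x
    rw [h2] at h1
    simp at h1
  have hp : IsProbabilityMeasure (ProbabilityTheory.cond ν (f ⁻¹' A n)) :=
    ProbabilityTheory.cond_isProbabilityMeasure hn
  have hp2 := Measure.isProbabilityMeasure_map (μ := ProbabilityTheory.cond ν (f ⁻¹' A n))
    hfm.aemeasurable
  refine ⟨_, hp2, n, fun S hS hc => ?_⟩
  have hz : (Measure.map f (ProbabilityTheory.cond ν (f ⁻¹' A n))) S = 0 := by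
    rw [Measure.map_apply hfm hS, ProbabilityTheory.cond_apply (hX _), ← Set.preimage_inter]
    have h3 : (f ⁻¹' (A n ∩ S)).Countable := hc.preimage_of_injOn hf.injOn
    have h4 : ν (f ⁻¹' (A n ∩ S)) = 0 := by
      rw [← Set.biUnion_of_singleton (f ⁻¹' (A n ∩ S))]
      exact (measure_biUnion_null_iff h3).2 (fun x _ => h0 x)
    rw [h4, mul_zero]
  rw [(prob_compl_eq_one_iff hS).2 hz]
  exact one_pos

theorem stmt5 {M : Type*} [MetricSpace M] [MeasurableSpace M] [BorelSpace M]
    (h : ∀ D : Set M, Dense D → HasNontrivialProbMeasure D) :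
    ∃ μ : Measure M, IsProbabilityMeasure μ ∧
      ∀ S : Set M, IsClosed S → TopologicalSpace.IsSeparable S → 0 < μ Sᶜ := by
  have hpos : ∀ n : ℕ, (0 : ℝ) < 1 / ((n : ℝ) + 1) := fun n => Nat.one_div_pos_of_nat
  choose A hA1 hA2 using fun n : ℕ => aux_max (M := M) _ (hpos n)
  have hD : Dense (⋃ n, A n) := by
    rw [Metric.dense_iff]
    intro x r hr
    obtain ⟨n, hn⟩ := exists_nat_one_div_lt hr
    obtain ⟨y, hy, hxy⟩ := hA2 n x
    refine ⟨y, ?_, Set.mem_iUnion.2 ⟨n, hy⟩⟩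
    rw [Metric.mem_ball, dist_comm]
    exact hxy.trans hn
  obtain ⟨ν, hν, h0⟩ := h _ hD
  obtain ⟨μ, hμ, n, hn⟩ := @aux_push M ↥(⋃ n, A n) _ ⊤ (fun _ => trivial) ν hν h0
    Subtype.val Subtype.val_injective A (fun x => Set.mem_iUnion.1 x.2)
  exact ⟨μ, hμ, fun S hS hs => hn S hS.measurableSet (aux_countable _ (hpos n) _ _ (hA1 n) hs)⟩
end

section
/- For a metric space M the following are equivalent: (i) there exists a dense subset D of M carrying no nontrivial probability measure; (ii) every σ-finite Borel measure on M is concentrated on a separable subset, i.e. for every σ-finite Borel measure μ on M there exists a closed separable set S ⊆ M with μ(M \ S) = 0. -/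
open MeasureTheory

lemma aux_sep {M : Type*} [MetricSpace M] (s : Set M) (ε : ℝ) (hε : 0 < ε) :
    ∃ t ⊆ s, (∀ x ∈ t, ∀ y ∈ t, x ≠ y → ε ≤ dist x y) ∧ ∀ x ∈ s, ∃ y ∈ t, dist x y < ε := by
  obtain ⟨t, ht⟩ := zorn_subset {t : Set M | t ⊆ s ∧ ∀ x ∈ t, ∀ y ∈ t, x ≠ y → ε ≤ dist x y} (by
    intro c hc hch
    refine ⟨⋃₀ c, ⟨Set.sUnion_subset fun a ha => (hc ha).1, ?_⟩,
      fun a ha => Set.subset_sUnion_of_mem ha⟩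
    rintro x ⟨a, ha, hxa⟩ y ⟨b, hb, hyb⟩ hxy
    rcases hch.total ha hb with h | h
    · exact (hc hb).2 x (h hxa) y hyb hxy
    · exact (hc ha).2 x hxa y (h hyb) hxy)
  refine ⟨t, ht.prop.1, ht.prop.2, ?_⟩
  intro x hx
  by_contra! hcon
  have hmem : insert x t ∈ {t : Set M | t ⊆ s ∧ ∀ x ∈ t, ∀ y ∈ t, x ≠ y → ε ≤ dist x y} := by
    refine ⟨Set.insert_subset hx ht.prop.1, ?_⟩
    rintro a (rfl | ha) b (rfl | hb) hab
    · exact absurd rfl hab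
    · exact hcon b hb
    · rw [dist_comm]; exact hcon a ha
    · exact ht.prop.2 a ha b hb hab
  have : x ∈ t := ht.le_of_ge hmem (Set.subset_insert x t) (Set.mem_insert x t)
  have h2 := hcon x this
  rw [dist_self] at h2
  linarith

lemma aux_disc {M ι : Type*} [MetricSpace M] [MeasurableSpace M] [BorelSpace M]
    {mι : MeasurableSpace ι} [DiscreteMeasurableSpace ι]
    (hι : ∀ ν : Measure ι, IsProbabilityMeasure ν → ∃ x, ν {x} ≠ 0)
    (μ : Measure M) [IsFiniteMeasure μ] (C : ι → Set M) (ε : ℝ) (hε : 0 < ε)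
    (hC : ∀ i, IsClosed (C i))
    (hsep : ∀ i j, i ≠ j → ∀ x ∈ C i, ∀ y ∈ C j, ε ≤ dist x y)
    (hnull : ∀ i, μ (C i) = 0) : μ (⋃ i, C i) = 0 := by
  have hcl : ∀ A : Set ι, IsClosed (⋃ i : A, C i) := by
    intro A
    refine LocallyFinite.isClosed_iUnion ?_ (fun i => hC i)
    intro x
    refine ⟨Metric.ball x (ε / 2), Metric.ball_mem_nhds x (by linarith), ?_⟩
    refine Set.Subsingleton.finite ?_
    rintro i ⟨y, hy, hyx⟩ j ⟨z, hz, hzx⟩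
    by_contra hij
    have h1 := hsep i j (fun h => hij (Subtype.ext h)) y hy z hz
    rw [Metric.mem_ball] at hyx hzx
    have h2 := dist_triangle_right y z x
    linarith
  set E : Set M := ⋃ i, C i with hE
  have hEm : MeasurableSet E := by
    have h1 := (hcl Set.univ).measurableSet
    have h2 : (⋃ i : (Set.univ : Set ι), C i) = E := by
      ext x; simp [hE]
    rwa [h2] at h1
  have hex : ∀ x : E, ∃ i, (x : M) ∈ C i := fun x => Set.mem_iUnion.1 x.2
  choose f hf using hex
  have huniq : ∀ (x : E) i, (x : M) ∈ C i → f x = i := by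
    intro x i hi
    by_contra hne
    have := hsep _ _ hne _ (hf x) _ hi
    rw [dist_self] at this
    linarith
  have hpre : ∀ A : Set ι, f ⁻¹' A = Subtype.val ⁻¹' (⋃ i : A, C i) := by
    intro A
    ext x
    simp only [Set.mem_preimage, Set.mem_iUnion]
    constructor
    · intro h; exact ⟨⟨f x, h⟩, hf x⟩
    · rintro ⟨i, hi⟩
      rw [huniq x i hi]; exact i.2
  have hfm : Measurable f := by
    intro A _
    rw [hpre]
    exact measurable_subtype_coe (hcl A).measurableSet
  set ν : Measure ι := (μ.comap (Subtype.val : E → M)).map f with hν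
  have hcomap : ∀ s : Set E, μ.comap (Subtype.val : E → M) s = μ (Subtype.val '' s) := fun s =>
    (MeasurableEmbedding.subtype_coe hEm).comap_apply μ s
  have huniv : ν Set.univ = μ E := by
    rw [hν, Measure.map_apply hfm MeasurableSet.univ, hcomap]
    simp
  have hsing : ∀ i, ν {i} = 0 := by
    intro i
    rw [hν, Measure.map_apply hfm (MeasurableSet.of_discrete), hcomap]
    refine measure_mono_null ?_ (hnull i)
    rintro _ ⟨x, hx, rfl⟩
    have : f x = i := hx
    rw [← this]; exact hf x
  by_contra hne
  rw [← huniv] at hne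
  have hfin : ν Set.univ ≠ ⊤ := by rw [huniv]; exact measure_ne_top _ _
  obtain ⟨x, hx⟩ := hι ((ν Set.univ)⁻¹ • ν) ⟨by
    simp [ENNReal.inv_mul_cancel hne hfin]⟩
  apply hx
  simp [hsing]

lemma aux_open {M ι : Type*} [MetricSpace M] [MeasurableSpace M] [BorelSpace M]
    {mι : MeasurableSpace ι} [DiscreteMeasurableSpace ι]
    (hι : ∀ ν : Measure ι, IsProbabilityMeasure ν → ∃ x, ν {x} ≠ 0)
    (μ : Measure M) [IsFiniteMeasure μ] (B : ι → Set M)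
    (hB : ∀ i, IsOpen (B i))
    (hnull : ∀ i, μ (B i) = 0) : μ (⋃ i, B i) = 0 := by
  let r : ι → ι → Prop := WellOrderingRel
  have hr : WellFounded r := WellOrderingRel.isWellOrder.wf
  let C : ℕ → ι → Set M := fun n i =>
    {x | (∀ y ∉ B i, 1 / ((n : ℝ) + 1) ≤ dist x y) ∧ ∀ j, r j i → x ∉ B j}
  have hpos : ∀ n : ℕ, (0 : ℝ) < 1 / ((n : ℝ) + 1) := fun n => Nat.one_div_pos_of_nat
  have hCB : ∀ n i, C n i ⊆ B i := by
    intro n i x hx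
    by_contra hxB
    have h1 := hx.1 x hxB
    rw [dist_self] at h1
    linarith [hpos n]
  have hmain : ∀ n, μ (⋃ i, C n i) = 0 := by
    intro n
    refine aux_disc hι μ (C n) _ (hpos n) ?_ ?_ ?_
    · intro i
      have : C n i = (⋂ y, ⋂ (_ : y ∉ B i), {x | 1 / ((n : ℝ) + 1) ≤ dist x y}) ∩
          ⋂ j, ⋂ (_ : r j i), (B j)ᶜ := by
        ext x; simp [C]
      rw [this]
      refine IsClosed.inter ?_ ?_
      · exact isClosed_iInter fun y => isClosed_iInter fun _ =>
          isClosed_le continuous_const (continuous_id.dist continuous_const)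
      · exact isClosed_iInter fun y => isClosed_iInter fun _ => (hB y).isClosed_compl
    · intro i j hij x hx y hy
      rcases trichotomous_of r i j with h | h | h
      · exact hx.1 y (hy.2 i h)
      · exact absurd h hij
      · rw [dist_comm]; exact hy.1 x (hx.2 j h)
    · intro i
      exact measure_mono_null (hCB n i) (hnull i)
  refine measure_mono_null ?_ (measure_iUnion_null hmain)
  intro x hx
  rw [Set.mem_iUnion] at hx
  obtain ⟨i, hi, hmin⟩ := hr.has_min {i | x ∈ B i} hx
  obtain ⟨δ, hδ, hball⟩ := Metric.isOpen_iff.1 (hB i) x hi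
  obtain ⟨n, hn⟩ := exists_nat_one_div_lt hδ
  refine Set.mem_iUnion.2 ⟨n, Set.mem_iUnion.2 ⟨i, ?_, ?_⟩⟩
  · intro y hy
    by_contra! hlt
    apply hy
    apply hball
    rw [Metric.mem_ball, dist_comm]
    linarith
  · intro j hj hxj
    exact hmin j hxj hj

lemma aux_conv {M ι : Type*} [MetricSpace M] [MeasurableSpace M] [BorelSpace M]
    {mι : MeasurableSpace ι} [DiscreteMeasurableSpace ι]
    (h : ∀ μ : Measure M, SigmaFinite μ →
        ∃ S : Set M, IsClosed S ∧ TopologicalSpace.IsSeparable S ∧ μ Sᶜ = 0)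
    (μ : Measure ι) [IsFiniteMeasure μ] (hμ : ∀ i, μ {i} = 0) (e : ι → M)
    (he : Function.Injective e) (t : Set M) (ε : ℝ) (hε : 0 < ε)
    (ht : ∀ x ∈ t, ∀ y ∈ t, x ≠ y → ε ≤ dist x y) : μ (e ⁻¹' t) = 0 := by
  have hem : Measurable e := fun s _ => MeasurableSet.of_discrete
  obtain ⟨S, hS, ⟨c, hc, hSc⟩, hS0⟩ := h ((μ.restrict (e ⁻¹' t)).map e) inferInstance
  rw [Measure.map_apply hem hS.isOpen_compl.measurableSet,
    Measure.restrict_apply MeasurableSet.of_discrete] at hS0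
  have hex : ∀ x : ↥(S ∩ t), ∃ y ∈ c, dist (x : M) y < ε / 2 := fun x =>
    Metric.mem_closure_iff.1 (hSc x.2.1) _ (by linarith)
  choose g hgc hg using hex
  have hcount : (S ∩ t).Countable := by
    have : Countable c := hc.to_subtype
    rw [← Set.countable_coe_iff]
    refine Function.Injective.countable (f := fun x => (⟨g x, hgc x⟩ : c)) ?_
    intro x y hxy
    have hxy' : g x = g y := congrArg Subtype.val hxy
    by_contra hne
    have h1 := ht x x.2.2 y y.2.2 (fun h => hne (Subtype.ext h))
    have h2 := hg x
    have h3 := hg y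
    rw [hxy'] at h2
    have h4 := dist_triangle_right (x : M) y (g y)
    linarith
  have hcount' : (e ⁻¹' (S ∩ t)).Countable := hcount.preimage he
  have : NullSingletonClass μ := ⟨hμ⟩
  have h0 := hcount'.measure_zero μ
  refine measure_mono_null ?_ (measure_union_null h0 hS0)
  intro x hx
  by_cases hxS : e x ∈ S
  · exact Or.inl ⟨hxS, hx⟩
  · exact Or.inr ⟨hxS, hx⟩

lemma aux_fin {M : Type*} [MetricSpace M] [MeasurableSpace M] [BorelSpace M]
    (D : Set M) (hD : Dense D) (hn : ¬ HasNontrivialProbMeasure D)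
    (μ : Measure M) [IsFiniteMeasure μ] :
    ∃ S : Set M, IsClosed S ∧ TopologicalSpace.IsSeparable S ∧ μ Sᶜ = 0 := by
  classical
  let R : ℕ → ℝ := fun n => 1 / ((n : ℝ) + 1)
  have hpos : ∀ n : ℕ, 0 < R n := fun n => Nat.one_div_pos_of_nat
  let B : ℕ → D → Set M := fun n d =>
    if μ (Metric.ball (d : M) (R n)) = 0 then Metric.ball (d : M) (R n) else ∅
  have hBo : ∀ n d, IsOpen (B n d) := by
    intro n d
    simp only [B]
    split_ifs
    · exact Metric.isOpen_ball
    · exact isOpen_empty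
  have hB0 : ∀ n d, μ (B n d) = 0 := by
    intro n d
    simp only [B]
    split_ifs with h
    · exact h
    · simp
  have hU0 : ∀ n, μ (⋃ d, B n d) = 0 := by
    intro n
    refine @aux_open M D _ _ _ ⊤ (@DiscreteMeasurableSpace.mk _ ⊤ fun _ => trivial) ?_ μ _
      (B n) (hBo n) (hB0 n)
    intro ν hν
    by_contra! hcon
    exact hn ⟨ν, hν, hcon⟩
  refine ⟨(⋃ n, ⋃ d, B n d)ᶜ, ?_, ?_, ?_⟩
  · exact (isOpen_iUnion fun n => isOpen_iUnion fun d => hBo n d).isClosed_compl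
  · have hball : ∀ x ∈ (⋃ n, ⋃ d, B n d)ᶜ, ∀ ε > 0, 0 < μ (Metric.ball x ε) := by
      intro x hx ε hε
      rw [pos_iff_ne_zero]
      intro h0
      apply hx
      obtain ⟨n, hn⟩ := exists_nat_one_div_lt (half_pos hε)
      obtain ⟨d, hd, hdx⟩ := hD.exists_dist_lt x (hpos n)
      have hR : R n < ε / 2 := hn
      refine Set.mem_iUnion.2 ⟨n, Set.mem_iUnion.2 ⟨⟨d, hd⟩, ?_⟩⟩
      have : μ (Metric.ball d (R n)) = 0 := by
        refine measure_mono_null (Metric.ball_subset_ball' ?_) h0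
        rw [dist_comm] 
        linarith
      simp only [B]
      rw [if_pos this]
      exact hdx
    generalize (⋃ n, ⋃ d, B n d)ᶜ = S at hball
    have key : ∀ n, ∃ t ⊆ S, t.Countable ∧ ∀ x ∈ S, ∃ y ∈ t, dist x y < R n := by
      intro n
      obtain ⟨t, htS, hts, htc⟩ := aux_sep S (R n) (hpos n)
      refine ⟨t, htS, ?_, htc⟩
      have h1 := Measure.countable_meas_pos_of_disjoint_iUnion (μ := μ)
        (As := fun x : t => Metric.ball (x : M) (R n / 2))
        (fun i => Metric.isOpen_ball.measurableSet) (by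
          intro x y hxy
          apply Metric.ball_disjoint_ball
          have := hts x x.2 y y.2 (fun h => hxy (Subtype.ext h))
          linarith)
      have h2 : {i : t | 0 < μ (Metric.ball (i : M) (R n / 2))} = Set.univ :=
        Set.eq_univ_of_forall fun i => hball i (htS i.2) _ (half_pos (hpos n))
      rw [h2, Set.countable_univ_iff] at h1
      exact Set.countable_coe_iff.1 h1
    choose t htS htc ht using key
    refine ⟨⋃ n, t n, Set.countable_iUnion htc, ?_⟩
    intro x hx
    rw [Metric.mem_closure_iff]
    intro ε hε
    obtain ⟨n, hn⟩ := exists_nat_one_div_lt hε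
    obtain ⟨y, hy, hxy⟩ := ht n x hx
    exact ⟨y, Set.mem_iUnion.2 ⟨n, hy⟩, hxy.trans hn⟩
  · rw [compl_compl]
    exact measure_iUnion_null hU0

theorem stmt6 {M : Type*} [MetricSpace M] [MeasurableSpace M] [BorelSpace M] :
    (∃ D : Set M, Dense D ∧ ¬ HasNontrivialProbMeasure D) ↔
      ∀ μ : Measure M, SigmaFinite μ →
        ∃ S : Set M, IsClosed S ∧ TopologicalSpace.IsSeparable S ∧ μ Sᶜ = 0 := by
  constructor
  · rintro ⟨D, hD, hn⟩ μ hμ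
    obtain ⟨S, h1, h2, h3⟩ := aux_fin D hD hn μ.toFinite
    exact ⟨S, h1, h2, absolutelyContinuous_toFinite μ h3⟩
  · intro h
    have key := fun n : ℕ => aux_sep (Set.univ : Set M) (1 / ((n : ℝ) + 1))
      Nat.one_div_pos_of_nat
    choose t _ hts htc using key
    refine ⟨⋃ n, t n, ?_, ?_⟩
    · rw [Metric.dense_iff]
      intro x ε hε
      obtain ⟨n, hn⟩ := exists_nat_one_div_lt hε
      obtain ⟨y, hy, hxy⟩ := htc n x trivial
      refine ⟨y, ?_, Set.mem_iUnion.2 ⟨n, hy⟩⟩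
      rw [Metric.mem_ball, dist_comm]
      exact hxy.trans hn
    · rintro ⟨μ, hμ, hμ0⟩
      have h0 : ∀ n, μ (Subtype.val ⁻¹' (t n)) = 0 := fun n =>
        @aux_conv M _ _ _ _ ⊤ (@DiscreteMeasurableSpace.mk _ ⊤ fun _ => trivial) h μ
          (@IsFiniteMeasure.mk _ ⊤ μ (by rw [hμ.measure_univ]; exact ENNReal.one_lt_top)) hμ0 Subtype.val
          Subtype.val_injective (t n) _ Nat.one_div_pos_of_nat (hts n)
      have h1 := measure_iUnion_null h0
      have h2 : (⋃ n, (Subtype.val : ↥(⋃ n, t n) → M) ⁻¹' (t n)) = Set.univ := by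
        refine Set.eq_univ_of_forall fun x => ?_
        obtain ⟨n, hn⟩ := Set.mem_iUnion.1 x.2
        exact Set.mem_iUnion.2 ⟨n, hn⟩
      rw [h2, hμ.measure_univ] at h1
      exact one_ne_zero h1
end

section
/- Let M be a metric space, z ∈ M, r > 0, and let M' ⊆ M satisfy d(x,y) ≥ 3r for all distinct x, y ∈ M' and d(z,x) > r for all x ∈ M'. Let μ' be a nontrivial probability measure on M'. For a finite set N ⊆ M define f_N : M → ℝ by f_N(m) = r − min(dist(m,N), r), where dist(m,N) is the infimum of d(m,n) over n ∈ N. Then: (i) for every finite N ⊆ M, ∫_{x ∈ M'} f_N(x)/d(z,x) dμ'(x) = 0; (ii) 0 < ∫_{x ∈ M'} r/d(z,x) dμ'(x) ≤ 1. -/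
open MeasureTheory

/-- `fN r N m = r - min (dist m N) r`, where `dist m N` is the infimum of the distances
from `m` to points of `N` (with the convention `inf ∅ = +∞`, which is implemented by
inserting `r` into the set before taking the infimum: for nonempty `N` this agrees with
`r - min (Metric.infDist m N) r`, and for `N = ∅` it gives `0`). -/
noncomputable def fN {M : Type*} [MetricSpace M] (r : ℝ) (N : Finset M) (m : M) : ℝ :=
  r - sInf (insert r ((fun n => dist m n) '' (N : Set M)))

theorem stmt7 {M : Type*} [MetricSpace M] (z : M) {r : ℝ} (hr : 0 < r) {M' : Set M}
    (hsep : ∀ x ∈ M', ∀ y ∈ M', x ≠ y → 3 * r ≤ dist x y)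
    (hz : ∀ x ∈ M', r < dist z x)
    (μ' : @Measure ↥M' ⊤)
    (hprob : @IsProbabilityMeasure ↥M' ⊤ μ')
    (hnontriv : ∀ x : ↥M', μ' {x} = 0) :
    (∀ N : Finset M, ∫ x : ↥M', fN r N (x : M) / dist z (x : M) ∂μ' = 0) ∧
    (0 < ∫ x : ↥M', r / dist z (x : M) ∂μ' ∧ ∫ x : ↥M', r / dist z (x : M) ∂μ' ≤ 1) := by
  have hm : ∀ f : ↥M' → ℝ, @Measurable ↥M' ℝ ⊤ _ f := fun f => measurable_from_top
  have hpos : ∀ x : ↥M', 0 < dist z (x : M) := fun x => hr.trans (hz x x.2)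
  have hle : ∀ x : ↥M', r / dist z (x : M) ≤ 1 := fun x =>
    (div_le_one (hpos x)).2 (hz x x.2).le
  have hp : ∀ x : ↥M', 0 < r / dist z (x : M) := fun x => div_pos hr (hpos x)
  letI : MeasurableSpace ↥M' := ⊤
  have hint : Integrable (fun x : ↥M' => r / dist z (x : M)) μ' := by
    refine Integrable.of_bound (hm _).aestronglyMeasurable 1 (Filter.Eventually.of_forall ?_)
    intro x
    rw [Real.norm_of_nonneg (hp x).le]
    exact hle x
  refine ⟨?_, ?_, ?_⟩
  · intro N
    have hnull : μ' (⋃ n ∈ N, {x : ↥M' | dist (x : M) n < r}) = 0 := by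
      refine (measure_biUnion_null_iff N.countable_toSet).2 ?_
      intro n _
      have hs : {x : ↥M' | dist (x : M) n < r}.Subsingleton := by
        intro x hx y hy
        by_contra hxy
        have h1 := hsep x x.2 y y.2 (fun h => hxy (Subtype.ext h))
        have h2 := dist_triangle_right (x : M) y n
        simp only [Set.mem_setOf_eq] at hx hy
        linarith
      rcases hs.eq_empty_or_singleton with h | ⟨x, h⟩
      · rw [h]; exact measure_empty
      · rw [h]; exact hnontriv x
    refine integral_eq_zero_of_ae ?_
    filter_upwards [measure_eq_zero_iff_ae_notMem.1 hnull] with x hx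
    simp only [Set.mem_iUnion, Set.mem_setOf_eq, not_exists, not_lt] at hx
    have hl : IsLeast (insert r ((fun n => dist (x : M) n) '' (N : Set M))) r := by
      refine ⟨Set.mem_insert _ _, ?_⟩
      rintro _ (rfl | ⟨n, hn, rfl⟩)
      · exact le_rfl
      · exact hx n hn
    simp [fN, hl.csInf_eq]
  · rw [integral_pos_iff_support_of_nonneg (fun x => (hp x).le) hint]
    have : Function.support (fun x : ↥M' => r / dist z (x : M)) = Set.univ := by
      ext x; simpa using (hp x).ne'
    rw [this, measure_univ]
    exact one_pos
  · calc _ ≤ ∫ x : ↥M', (1 : ℝ) ∂μ' := integral_mono hint (integrable_const _) hle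
      _ = 1 := by simp
end

section
/- Let M be a metric space, C ⊆ M a closed set, and let μ₊ and μ₋ be finite Borel measures on M that are mutually singular. If ∫ f dμ₊ = ∫ f dμ₋ for every bounded Lipschitz function f : M → ℝ that vanishes identically on C, then μ₊(M \ C) = 0 and μ₋(M \ C) = 0. -/
open MeasureTheory

theorem stmt12 {M : Type*} [MetricSpace M] [MeasurableSpace M] [BorelSpace M]
    (C : Set M) (hC : IsClosed C)
    (μp μm : Measure M) (hp : IsFiniteMeasure μp) (hm : IsFiniteMeasure μm)
    (hsing : μp.MutuallySingular μm)
    (h : ∀ f : M → ℝ, (∃ K : NNReal, LipschitzWith K f) → (∃ B : ℝ, ∀ x, |f x| ≤ B) →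
      (∀ x ∈ C, f x = 0) → ∫ x, f x ∂μp = ∫ x, f x ∂μm) :
    μp Cᶜ = 0 ∧ μm Cᶜ = 0 := by
  have key : ∀ V : Set M, IsOpen V → V ⊆ Cᶜ → μp V = μm V := by
    intro V hV hVC
    have hpos : ∀ n : ℕ, (0 : ℝ) < 1 / ((n : ℝ) + 1) := fun n => Nat.one_div_pos_of_nat
    have hlim := tendsto_one_div_add_atTop_nhds_zero_nat (𝕜 := ℝ)
    have hF : IsClosed Vᶜ := hV.isClosed_compl
    have lim : ∀ μ : Measure M, IsFiniteMeasure μ → Filter.Tendsto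
        (fun n : ℕ => ∫ x, (1 - (thickenedIndicator (hpos n) Vᶜ x : ℝ)) ∂μ) Filter.atTop
        (nhds (μ.real V)) := by
      intro μ hμ
      have h1 := tendsto_integral_thickenedIndicator_of_isClosed μ hF hpos hlim
      have h2 := h1.const_sub (μ.real Set.univ)
      have h3 : μ.real Set.univ - μ.real Vᶜ = μ.real V := by
        rw [measureReal_compl hV.measurableSet]; ring
      rw [h3] at h2
      refine h2.congr fun n => ?_
      rw [integral_sub (integrable_const _) (integrable_thickenedIndicator _ (hpos n))]
      simp
    have heq : μp.real V = μm.real V := by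
      refine tendsto_nhds_unique (lim μp hp) ((lim μm hm).congr fun n => (h _ ?_ ?_ ?_).symm)
      · have hL := lipschitzWith_thickenedIndicator (hpos n) Vᶜ
        refine ⟨_, LipschitzWith.of_dist_le_mul (K := (1 / ((n : ℝ) + 1)).toNNReal⁻¹) fun x y => ?_⟩
        rw [dist_sub_left]
        exact hL.dist_le_mul x y
      · refine ⟨1, fun x => ?_⟩
        have h1 : (thickenedIndicator (hpos n) Vᶜ x : ℝ) ≤ 1 := by
          exact_mod_cast thickenedIndicator_le_one (hpos n) Vᶜ x
        have h0 : (0 : ℝ) ≤ thickenedIndicator (hpos n) Vᶜ x := NNReal.coe_nonneg _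
        rw [abs_le]; constructor <;> linarith
      · intro x hx
        have hxV : x ∈ Vᶜ := fun hv => hVC hv hx
        rw [thickenedIndicator_one (hpos n) Vᶜ hxV]; simp
    exact (measureReal_eq_measureReal_iff).1 heq
  have hres : μp.restrict Cᶜ = μm.restrict Cᶜ := by
    refine ext_of_generate_finite {s | IsOpen s} (BorelSpace.measurable_eq) isPiSystem_isOpen
      (fun s hs => ?_) ?_
    · have hs' : IsOpen s := hs
      rw [Measure.restrict_apply hs'.measurableSet, Measure.restrict_apply hs'.measurableSet]
      exact key _ (hs'.inter hC.isOpen_compl) Set.inter_subset_right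
    · simpa using key _ hC.isOpen_compl subset_rfl
  have hs := (hsing.restrict Cᶜ).symm.restrict Cᶜ
  have hs2 : (μm.restrict Cᶜ).MutuallySingular (μm.restrict Cᶜ) := by
    have := hs.symm
    rwa [hres] at this
  have h0 := (Measure.MutuallySingular.self_iff _).1 hs2
  refine ⟨Measure.restrict_eq_zero.1 (hres.trans h0), Measure.restrict_eq_zero.1 h0⟩
end

section
/- Let M be a metric space, z ∈ M, and let C ⊆ M be a closed set with z ∈ C. Let μ₊ and μ₋ be mutually singular Borel measures on M with μ₊({z}) = 0 and μ₋({z}) = 0, and such that the function x ↦ d(x,z) is integrable with respect to both μ₊ and μ₋. If ∫ f dμ₊ = ∫ f dμ₋ for every bounded Lipschitz function f : M → ℝ that vanishes identically on C, then μ₊(M \ C) = 0 and μ₋(M \ C) = 0. -/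
open MeasureTheory

theorem stmt13 {M : Type*} [MetricSpace M] [MeasurableSpace M] [BorelSpace M]
    (z : M) (C : Set M) (hC : IsClosed C) (hzC : z ∈ C)
    (μp μm : Measure M)
    (hsing : μp.MutuallySingular μm)
    (hpz : μp {z} = 0) (hmz : μm {z} = 0)
    (hpd : Integrable (fun x => dist x z) μp)
    (hmd : Integrable (fun x => dist x z) μm)
    (h : ∀ f : M → ℝ, (∃ K : NNReal, LipschitzWith K f) → (∃ B : ℝ, ∀ x, |f x| ≤ B) →
      (∀ x ∈ C, f x = 0) → ∫ x, f x ∂μp = ∫ x, f x ∂μm) :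
    μp Cᶜ = 0 ∧ μm Cᶜ = 0 := by
  set g : M → ℝ := fun x => min (Metric.infDist x C) 1 with hg
  have g0 : ∀ x, 0 ≤ g x := fun x => le_min Metric.infDist_nonneg zero_le_one
  have g1 : ∀ x, g x ≤ 1 := fun x => min_le_right _ _
  have gL : LipschitzWith 1 g := (Metric.lipschitz_infDist_pt C).min_const 1
  have gd : ∀ x, g x ≤ dist x z := fun x =>
    (min_le_left _ _).trans (Metric.infDist_le_dist_of_mem hzC)
  have gC : ∀ x ∈ C, g x = 0 := fun x hx => by
    simp [hg, Metric.infDist_zero_of_mem hx]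
  have gpos : ∀ x, x ∈ Cᶜ → 0 < g x := fun x hx =>
    lt_min ((hC.notMem_iff_infDist_pos ⟨z, hzC⟩).1 hx) one_pos
  have gm : Measurable g := gL.continuous.measurable
  have gint : ∀ μ : Measure M, Integrable (fun x => dist x z) μ → Integrable g μ := by
    intro μ hμ
    refine hμ.mono' gm.aestronglyMeasurable (ae_of_all _ fun x => ?_)
    rw [Real.norm_eq_abs, abs_of_nonneg (g0 x)]; exact gd x
  have key : ∀ μ : Measure M, Integrable (fun x => dist x z) μ → ∀ (δ : ℝ) (hδ : 0 < δ) (F : Set M),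
      ∫⁻ x, (thickenedIndicator hδ F x : ENNReal) ∂(μ.withDensity fun x => ENNReal.ofReal (g x))
        = ENNReal.ofReal (∫ x, g x * (thickenedIndicator hδ F x : ℝ) ∂μ) := by
    intro μ hμ δ hδ F
    have tm : Measurable (fun x => thickenedIndicator hδ F x) :=
      (thickenedIndicator hδ F).continuous.measurable
    rw [lintegral_withDensity_eq_lintegral_mul _ gm.ennreal_ofReal tm.coe_nnreal_ennreal,
      ofReal_integral_eq_lintegral_ofReal]
    · refine lintegral_congr fun x => ?_
      simp [ENNReal.ofReal_mul (g0 x)]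
    · refine (gint μ hμ).mono' (gm.mul tm.coe_nnreal_real).aestronglyMeasurable
        (ae_of_all _ fun x => ?_)
      have h1 : (thickenedIndicator hδ F x : ℝ) ≤ 1 := thickenedIndicator_le_one hδ F x
      have h2 : (0 : ℝ) ≤ thickenedIndicator hδ F x := NNReal.coe_nonneg _
      rw [Real.norm_eq_abs, abs_of_nonneg (mul_nonneg (g0 x) h2)]
      exact mul_le_of_le_one_right (g0 x) h1
    · exact ae_of_all _ fun x => mul_nonneg (g0 x) (NNReal.coe_nonneg _)
  have keyeq : ∀ (δ : ℝ) (hδ : 0 < δ) (F : Set M),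
      ∫ x, g x * (thickenedIndicator hδ F x : ℝ) ∂μp
        = ∫ x, g x * (thickenedIndicator hδ F x : ℝ) ∂μm := by
    intro δ hδ F
    have h1 : ∀ x, (thickenedIndicator hδ F x : ℝ) ≤ 1 := thickenedIndicator_le_one hδ F
    have h2 : ∀ x, (0 : ℝ) ≤ thickenedIndicator hδ F x := fun x => NNReal.coe_nonneg _
    apply h
    · refine ⟨1 + δ.toNNReal⁻¹, LipschitzWith.of_dist_le_mul fun x y => ?_⟩
      have a := gL.dist_le_mul x y
      have b := (lipschitzWith_thickenedIndicator hδ F).dist_le_mul x y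
      rw [NNReal.dist_eq] at b
      rw [Real.dist_eq] at a ⊢
      have e : g x * (thickenedIndicator hδ F x : ℝ) - g y * (thickenedIndicator hδ F y : ℝ)
        = (g x - g y) * (thickenedIndicator hδ F x : ℝ) +
          g y * ((thickenedIndicator hδ F x : ℝ) - (thickenedIndicator hδ F y : ℝ)) := by ring
      rw [e]
      refine (abs_add_le _ _).trans ?_
      rw [abs_mul, abs_mul, abs_of_nonneg (h2 x), abs_of_nonneg (g0 y), NNReal.coe_add, add_mul]
      exact add_le_add ((mul_le_of_le_one_right (abs_nonneg _) (h1 x)).trans a)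
        ((mul_le_of_le_one_left (abs_nonneg _) (g1 y)).trans b)
    · refine ⟨1, fun x => ?_⟩
      rw [abs_of_nonneg (mul_nonneg (g0 x) (h2 x))]
      exact mul_le_one₀ (g1 x) (h2 x) (h1 x)
    · intro x hx
      rw [gC x hx, zero_mul]
  have fp := isFiniteMeasure_withDensity_ofReal (gint μp hpd).2
  have fm := isFiniteMeasure_withDensity_ofReal (gint μm hmd).2
  have cl : ∀ F : Set M, IsClosed F → (μp.withDensity fun x => ENNReal.ofReal (g x)) F
      = (μm.withDensity fun x => ENNReal.ofReal (g x)) F := by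
    intro F hF
    have pos : ∀ n : ℕ, (0 : ℝ) < 1 / ((n : ℝ) + 1) := fun n => Nat.one_div_pos_of_nat
    have t1 := tendsto_lintegral_thickenedIndicator_of_isClosed
      (μp.withDensity fun x => ENNReal.ofReal (g x)) hF pos tendsto_one_div_add_atTop_nhds_zero_nat
    have t2 := tendsto_lintegral_thickenedIndicator_of_isClosed
      (μm.withDensity fun x => ENNReal.ofReal (g x)) hF pos tendsto_one_div_add_atTop_nhds_zero_nat
    simp_rw [key μp hpd, keyeq] at t1
    simp_rw [key μm hmd] at t2
    exact tendsto_nhds_unique t1 t2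
  have eq : (μp.withDensity fun x => ENNReal.ofReal (g x))
      = (μm.withDensity fun x => ENNReal.ofReal (g x)) := by
    apply ext_of_generate_finite _ ?_ isPiSystem_isClosed
    · exact fun F hF => cl F hF
    · exact cl _ isClosed_univ
    · rw [BorelSpace.measurable_eq (α := M), borel_eq_generateFrom_isClosed]
  have sing := hsing.mono_ac (withDensity_absolutelyContinuous μp fun x => ENNReal.ofReal (g x))
    (withDensity_absolutelyContinuous μm fun x => ENNReal.ofReal (g x))
  have fin : ∀ μ : Measure M, (μ.withDensity fun x => ENNReal.ofReal (g x)) = 0 → μ Cᶜ = 0 := by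
    intro μ h0
    rw [withDensity_eq_zero_iff gm.ennreal_ofReal.aemeasurable] at h0
    refine measure_mono_null (fun x hx => ?_) (ae_iff.1 h0)
    simpa using gpos x hx
  have z1 : (μp.withDensity fun x => ENNReal.ofReal (g x)) = 0 := by
    rw [← Measure.MutuallySingular.self_iff]
    rw [← eq] at sing
    exact sing
  exact ⟨fin μp z1, fin μm (eq ▸ z1)⟩
end

section
/- Let S = {0} ∪ (1,2] as a subset of ℝ. There do not exist finite Borel measures μ₁ and μ₂ on ℝ with μ₁(ℝ \ S) = 0 and μ₂(ℝ \ S) = 0 such that for every Lipschitz function g : ℝ → ℝ with g(0) = 0 one has ∫ g dμ₁ − ∫ g dμ₂ = g(1). -/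
open MeasureTheory

lemma aux_tendsto (μ : Measure ℝ) [IsFiniteMeasure μ]
    (h : μ (({0} ∪ Set.Ioc 1 2 : Set ℝ)ᶜ) = 0) :
    Filter.Tendsto (fun n : ℕ => ∫ x, max (1 - ((n:ℝ)+1) * |x - 1|) 0 ∂μ)
      Filter.atTop (nhds 0) := by
  have key := tendsto_integral_of_dominated_convergence (μ := μ)
    (F := fun (n : ℕ) (x : ℝ) => max (1 - ((n:ℝ)+1) * |x - 1|) 0) (f := fun _ => (0:ℝ))
    (fun _ => (1:ℝ)) ?_ (integrable_const 1) ?_ ?_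
  · simpa using key
  · intro n
    exact Continuous.aestronglyMeasurable (by fun_prop)
  · intro n
    refine Filter.Eventually.of_forall fun x => ?_
    rw [Real.norm_of_nonneg (le_max_right _ _)]
    refine max_le ?_ zero_le_one
    have : 0 ≤ ((n:ℝ)+1) * |x - 1| := by positivity
    linarith
  · have hne : ∀ᵐ x ∂μ, x ≠ (1:ℝ) := by
      rw [ae_iff]
      refine measure_mono_null ?_ h
      intro x hx
      simp only [ne_eq, not_not, Set.mem_setOf_eq] at hx
      subst hx
      simp
    filter_upwards [hne] with x hx
    have hpos : 0 < |x - 1| := abs_pos.mpr (sub_ne_zero.mpr hx)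
    obtain ⟨N, hN⟩ := exists_nat_gt (1 / |x - 1|)
    refine tendsto_const_nhds.congr' ?_
    filter_upwards [Filter.eventually_ge_atTop N] with n hn
    symm
    apply max_eq_right
    have h1 : (N:ℝ) ≤ n := by exact_mod_cast hn
    rw [div_lt_iff₀ hpos] at hN
    nlinarith

theorem stmt14 :
    ¬ ∃ (μ₁ μ₂ : Measure ℝ), IsFiniteMeasure μ₁ ∧ IsFiniteMeasure μ₂ ∧
      μ₁ (({0} ∪ Set.Ioc 1 2 : Set ℝ)ᶜ) = 0 ∧
      μ₂ (({0} ∪ Set.Ioc 1 2 : Set ℝ)ᶜ) = 0 ∧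
      ∀ g : ℝ → ℝ, (∃ K : NNReal, LipschitzWith K g) → g 0 = 0 →
        ∫ x, g x ∂μ₁ - ∫ x, g x ∂μ₂ = g 1 := by
  rintro ⟨μ₁, μ₂, i1, i2, h1, h2, H⟩
  have T := (aux_tendsto μ₁ h1).sub (aux_tendsto μ₂ h2)
  have E : ∀ n : ℕ, ∫ x, max (1 - ((n:ℝ)+1) * |x - 1|) 0 ∂μ₁
      - ∫ x, max (1 - ((n:ℝ)+1) * |x - 1|) 0 ∂μ₂ = 1 := by
    intro n
    have := H (fun x => max (1 - ((n:ℝ)+1) * |x - 1|) 0) ⟨(n:NNReal)+1, ?_⟩ ?_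
    · simpa using this
    · refine LipschitzWith.of_dist_le_mul fun x y => ?_
      rw [Real.dist_eq, Real.dist_eq]
      refine (abs_max_sub_max_le_abs _ _ _).trans ?_
      have e : 1 - ((n:ℝ)+1) * |x - 1| - (1 - ((n:ℝ)+1) * |y - 1|)
        = ((n:ℝ)+1) * (|y - 1| - |x - 1|) := by ring
      have hn : (0:ℝ) ≤ (n:ℝ)+1 := by positivity
      rw [e, abs_mul, abs_of_nonneg hn]
      push_cast
      refine mul_le_mul_of_nonneg_left ?_ hn
      refine (abs_abs_sub_abs_le_abs_sub _ _).trans ?_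
      rw [abs_sub_comm x y]
      simp
    · simp
  simp only [E] at T
  have := tendsto_nhds_unique T tendsto_const_nhds
  norm_num at this
end

section
/- Let M be a complete metric space and let μ be a finite Borel measure on M. Then μ is inner regular with respect to compact sets (i.e. μ(E) = sup{ μ(K) : K ⊆ E, K compact } for every Borel set E ⊆ M) if and only if μ is concentrated on a separable subset of M, i.e. there exists a closed separable set S ⊆ M with μ(M \ S) = 0. -/
open MeasureTheory

theorem stmt16 {M : Type*} [MetricSpace M] [CompleteSpace M]
    [MeasurableSpace M] [BorelSpace M]
    (μ : Measure M) (hμ : IsFiniteMeasure μ) :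
    (∀ E : Set M, MeasurableSet E →
        μ E = ⨆ (K : Set M) (_ : K ⊆ E) (_ : IsCompact K), μ K) ↔
      ∃ S : Set M, IsClosed S ∧ TopologicalSpace.IsSeparable S ∧ μ Sᶜ = 0 := by
  constructor
  · intro h
    have h1 : ∀ r : ENNReal, r < μ Set.univ → ∃ K : Set M, IsCompact K ∧ r < μ K := by
      intro r hr
      rw [h _ MeasurableSet.univ] at hr
      simp only [lt_iSup_iff] at hr
      obtain ⟨K, _, hK, hr⟩ := hr
      exact ⟨K, hK, hr⟩
    by_cases h0 : μ Set.univ = 0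
    · refine ⟨∅, isClosed_empty, Set.countable_empty.isSeparable, by simpa using h0⟩
    obtain ⟨u, -, hu, hlim⟩ := exists_seq_strictMono_tendsto' (pos_iff_ne_zero.mpr h0)
    choose K hK hKu using fun n => h1 (u n) (hu n).2
    refine ⟨closure (⋃ n, K n), isClosed_closure,
      (TopologicalSpace.IsSeparable.iUnion fun n => (hK n).isSeparable).closure, ?_⟩
    rw [measure_compl isClosed_closure.measurableSet (measure_ne_top _ _), tsub_eq_zero_iff_le]
    refine le_of_tendsto' hlim fun n => (hKu n).le.trans (measure_mono ?_)
    exact (Set.subset_iUnion K n).trans subset_closure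
  · rintro ⟨S, hS, hsep, h0⟩ E hE
    refine le_antisymm ?_ (iSup_le fun K => iSup_le fun hK => iSup_le fun _ => measure_mono hK)
    have : TopologicalSpace.SeparableSpace S := hsep.separableSpace
    have : SecondCountableTopology S := UniformSpace.secondCountable_of_separable S
    have : CompleteSpace S := hS.completeSpace_coe
    have emb := MeasurableEmbedding.subtype_coe hS.measurableSet
    have hfin : IsFiniteMeasure (μ.comap (Subtype.val : S → M)) := by
      constructor
      rw [emb.comap_apply]
      exact measure_lt_top _ _
    refine le_of_forall_lt fun r hr => ?_
    have e : μ E = μ.comap (Subtype.val : S → M) (Subtype.val ⁻¹' E) := by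
      rw [emb.comap_apply, Subtype.image_preimage_coe, Set.inter_comm]
      exact (measure_inter_conull h0).symm
    rw [e] at hr
    obtain ⟨K, hKE, ⟨hK, -⟩, hr⟩ := innerRegular_isCompact_isClosed_measurableSet_of_finite
      (μ.comap (Subtype.val : S → M)) (measurable_subtype_coe hE) r hr
    rw [emb.comap_apply] at hr
    simp only [lt_iSup_iff]
    exact ⟨_, Set.image_subset_iff.mpr hKE, hK.image continuous_subtype_val, hr⟩
end
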